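/- For every 1 ≤ i ≤ n²/2 and j ∈ {0,1}, the element E^{n²−1}·α_{2i,j}·E^{n²−2i} of u is nonzero. -/

import Mathlib

noncomputable section

open scoped TensorProduct

namespace QFL

/-- The defining relations of the quasi-Frobenius-Lusztig kernel `ũ_q(sl₂)`,
on the free algebra on four generators `K = ι 0`, `K̂ = ι 1`, `E = ι 2`, `F = ι 3`. -/
inductive Rel (k : Type) [Field k] (n : ℕ) (q : k) :
    FreeAlgebra k (Fin 4) → FreeAlgebra k (Fin 4) → Prop
  | Kord : Rel k n q (FreeAlgebra.ι k (0 : Fin 4) ^ n) 1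
  | Khord : Rel k n q (FreeAlgebra.ι k (1 : Fin 4) ^ n)
      ((FreeAlgebra.ι k (0 : Fin 4) ^ (n - 1)) ^ 2)
  | KKh : Rel k n q (FreeAlgebra.ι k (0 : Fin 4) * FreeAlgebra.ι k (1 : Fin 4))
      (FreeAlgebra.ι k (1 : Fin 4) * FreeAlgebra.ι k (0 : Fin 4))
  | KE : Rel k n q
      (FreeAlgebra.ι k (0 : Fin 4) * FreeAlgebra.ι k (2 : Fin 4) *
        FreeAlgebra.ι k (0 : Fin 4) ^ (n - 1))
      (q ^ n • FreeAlgebra.ι k (2 : Fin 4))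
  | KF : Rel k n q
      (FreeAlgebra.ι k (0 : Fin 4) * FreeAlgebra.ι k (3 : Fin 4) *
        FreeAlgebra.ι k (0 : Fin 4) ^ (n - 1))
      ((q ^ n)⁻¹ • FreeAlgebra.ι k (3 : Fin 4))
  | KhE : Rel k n q
      (FreeAlgebra.ι k (1 : Fin 4) * FreeAlgebra.ι k (2 : Fin 4) *
        FreeAlgebra.ι k (1 : Fin 4) ^ (n ^ 2 - 1))
      ((q ^ n * (q ^ 2)⁻¹) • FreeAlgebra.ι k (2 : Fin 4))
  | KhF : Rel k n q
      (FreeAlgebra.ι k (1 : Fin 4) * FreeAlgebra.ι k (3 : Fin 4) *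
        FreeAlgebra.ι k (1 : Fin 4) ^ (n ^ 2 - 1))
      (((q ^ n)⁻¹ * q ^ 2) • FreeAlgebra.ι k (3 : Fin 4))
  | Enil : Rel k n q (FreeAlgebra.ι k (2 : Fin 4) ^ n ^ 2) 0
  | Fnil : Rel k n q (FreeAlgebra.ι k (3 : Fin 4) ^ n ^ 2) 0
  | EF : Rel k n q
      (FreeAlgebra.ι k (3 : Fin 4) * FreeAlgebra.ι k (2 : Fin 4) -
        q⁻¹ • (FreeAlgebra.ι k (2 : Fin 4) * FreeAlgebra.ι k (3 : Fin 4)))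
      (1 - FreeAlgebra.ι k (0 : Fin 4) ^ (n - 1) * FreeAlgebra.ι k (1 : Fin 4))

/-- The algebra `ũ_q(sl₂)` as the quotient of the free algebra by the defining relations. -/
abbrev U (k : Type) [Field k] (n : ℕ) (q : k) := RingQuot (Rel k n q)

variable (k : Type) [Field k] (n : ℕ) (q : k)

def K : U k n q := RingQuot.mkAlgHom k (Rel k n q) (FreeAlgebra.ι k (0 : Fin 4))
def Kh : U k n q := RingQuot.mkAlgHom k (Rel k n q) (FreeAlgebra.ι k (1 : Fin 4))
def E : U k n q := RingQuot.mkAlgHom k (Rel k n q) (FreeAlgebra.ι k (2 : Fin 4))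
def F : U k n q := RingQuot.mkAlgHom k (Rel k n q) (FreeAlgebra.ι k (3 : Fin 4))

/-- `K⁻¹ = K^(n-1)`. -/
def Kinv : U k n q := K k n q ^ (n - 1)
/-- `K̂⁻¹ = K̂^(n²-1)`. -/
def Khinv : U k n q := Kh k n q ^ (n ^ 2 - 1)

/-- `φ_{2i} = (2/n²) Σ_{t<n²/2} q^{-2it} (K⁻¹K̂)^t`. -/
def phi (i : ℕ) : U k n q :=
  ((n ^ 2 : k)⁻¹ * 2) • ∑ t ∈ Finset.range (n ^ 2 / 2),
    (q⁻¹ ^ (2 * i * t)) • (Kinv k n q * Kh k n q) ^ t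

/-- `𝟙₀ = (1/2)(1 + KK̂^(n/2))` and `𝟙₁ = (1/2)(1 - KK̂^(n/2))`. -/
def oneJ (j : ℕ) : U k n q :=
  if j = 0 then (2 : k)⁻¹ • (1 + K k n q * Kh k n q ^ (n / 2))
  else (2 : k)⁻¹ • (1 - K k n q * Kh k n q ^ (n / 2))

/-- The idempotent `e_{2i,j} = φ_{2i} 𝟙_j`. -/
def eIdem (i j : ℕ) : U k n q := phi k n q i * oneJ k n q j

/-- `α_{2i,j} = F^(n²-1) e_{2i,j}`. -/
def alpha (i j : ℕ) : U k n q := F k n q ^ (n ^ 2 - 1) * eIdem k n q i j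

/-- `β_{2i,j} = E^(2i-2) α_{2i,j}`. -/
def beta (i j : ℕ) : U k n q := E k n q ^ (2 * i - 2) * alpha k n q i j

/-- The Gaussian number `s_q = 1 + q + ⋯ + q^(s-1)`. -/
def gauss (x : k) (s : ℕ) : k := ∑ t ∈ Finset.range s, x ^ t

/-- The span of the PBW-type monomials `F^a K^c K̂^d E^b` with `a ≤ n²-2`, `b ≤ n²-1`,
`c ≤ n-1`, `d ≤ n²-1`. -/
def pbw : Submodule k (U k n q) :=
  Submodule.span k {x | ∃ a b c d : ℕ, a ≤ n ^ 2 - 2 ∧ b ≤ n ^ 2 - 1 ∧ c ≤ n - 1 ∧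
    d ≤ n ^ 2 - 1 ∧ x = F k n q ^ a * K k n q ^ c * Kh k n q ^ d * E k n q ^ b}

/-- `γ_{2i,j}`: the unique element of the PBW span with `F·γ = β_{2i,j}`. -/
def gam (i j : ℕ) : U k n q :=
  @dite _ (∃! x, x ∈ pbw k n q ∧ F k n q * x = beta k n q i j)
    (Classical.propDecidable _) (fun h => h.choose) (fun _ => 0)

/-- The left ideal `P_{2i,j} = u·γ_{2i,j}`. -/
def P (i j : ℕ) : Submodule (U k n q) (U k n q) :=
  Submodule.span (U k n q) {gam k n q i j}

/-- `S_{2i,j} = Soc(P_{2i,j})`, the sum of all simple submodules of `P_{2i,j}`. -/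
def S (i j : ℕ) : Submodule (U k n q) (U k n q) :=
  sSup {N : Submodule (U k n q) (U k n q) | N ≤ P k n q i j ∧ IsSimpleModule (U k n q) N}

end QFL

namespace QFLaux

open Finset

/-- The space on which the representation lives. -/
abbrev V (k : Type) [Field k] (N : ℕ) := (Fin N × Fin N) →₀ k

/-- Basis vectors `E^a F^b w`, extended by zero. -/
def ev (k : Type) [Field k] (N : ℕ) (a b : ℕ) : V k N :=
  if h : a < N ∧ b < N then Finsupp.single (⟨a, h.1⟩, ⟨b, h.2⟩) 1 else 0

def lin (k : Type) [Field k] (N : ℕ) (f : ℕ → ℕ → V k N) : Module.End k (V k N) :=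
  Finsupp.linearCombination k (fun p : Fin N × Fin N => f p.1 p.2)

theorem ev_zero (k : Type) [Field k] (N : ℕ) (a b : ℕ) (h : ¬ (a < N ∧ b < N)) :
    ev k N a b = 0 := by
  simp [ev, h]

theorem ev_ne (k : Type) [Field k] (N : ℕ) (a b : ℕ) (h : a < N ∧ b < N) :
    ev k N a b ≠ 0 := by
  simp [ev, h]

theorem lin_ev (k : Type) [Field k] (N : ℕ) (f : ℕ → ℕ → V k N)
    (hf : ∀ a b, ¬ (a < N ∧ b < N) → f a b = 0) (a b : ℕ) :
    lin k N f (ev k N a b) = f a b := by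
  by_cases h : a < N ∧ b < N
  · simp [lin, ev, h]
  · rw [hf a b h, ev_zero k N a b h, map_zero]

theorem ext_ev (k : Type) [Field k] (N : ℕ) (f g : Module.End k (V k N))
    (h : ∀ a b, f (ev k N a b) = g (ev k N a b)) : f = g := by
  apply Finsupp.lhom_ext'
  rintro ⟨a, b⟩
  ext
  have := h a b
  simp [ev] at this
  simp [this]

theorem eig_pow {k W : Type} [Field k] [AddCommGroup W] [Module k W] (f : Module.End k W)
    (v : W) (x : k) (h : f v = x • v) (t : ℕ) : (f ^ t) v = x ^ t • v := by
  induction t with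
  | zero => simp
  | succ t ih => rw [pow_succ, Module.End.mul_apply, h, map_smul, ih, smul_smul, pow_succ, mul_comm]

theorem gs_rel {k : Type} [Field k] (q : k) (hq : q ≠ 0) (s : ℕ) :
    ∑ t ∈ range (s + 1), q ^ t = q ^ s * ∑ t ∈ range (s + 1), q⁻¹ ^ t := by
  induction s with
  | zero => simp
  | succ s ih =>
    rw [geom_sum_succ, ih, sum_range_succ _ (s + 1), mul_add, ← mul_pow, mul_inv_cancel₀ hq]
    ring

theorem gs_zero {k : Type} [Field k] (q : k) (N : ℕ) (hq : IsPrimitiveRoot q N) (hN : 1 < N) :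
    ∑ t ∈ range N, q ^ t = 0 := hq.geom_sum_eq_zero hN

theorem gs_ne {k : Type} [Field k] (q : k) (N : ℕ) (hq : IsPrimitiveRoot q N) (s : ℕ)
    (h0 : 0 < s) (hs : s < N) : ∑ t ∈ range s, q ^ t ≠ 0 := by
  intro h
  have h1 := mul_geom_sum q s
  rw [h, mul_zero] at h1
  exact hq.pow_ne_one_of_pos_of_lt h0.ne' hs (sub_eq_zero.mp h1.symm)

theorem FE_comm {k A : Type} [Field k] [Ring A] [Algebra k A] (q : k) (hq : q ≠ 0)
    (E F G : A) (h1 : F * E = q⁻¹ • (E * F) + 1 - G) (h2 : G * F = q ^ 2 • (F * G)) (s : ℕ) :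
    F ^ (s + 1) * E = q⁻¹ ^ (s + 1) • (E * F ^ (s + 1))
      + (∑ t ∈ range (s + 1), q⁻¹ ^ t) • F ^ s
      - (∑ t ∈ range (s + 1), q ^ t) • (F ^ s * G) := by
  induction s with
  | zero => simp [h1]
  | succ s ih =>
    have e1 : F ^ (s + 1 + 1) * E = q⁻¹ • ((F ^ (s + 1) * E) * F) + F ^ (s + 1) - F ^ (s + 1) * G := by
      rw [pow_succ F (s + 1), mul_assoc, h1]
      simp only [mul_add, mul_sub, mul_one, mul_smul_comm, mul_assoc]
    have e2 : F ^ s * G * F = q ^ 2 • (F ^ (s + 1) * G) := by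
      rw [mul_assoc, h2, mul_smul_comm, ← mul_assoc, ← pow_succ]
    rw [e1, ih, geom_sum_succ (x := q) (n := s + 1), geom_sum_succ (x := q⁻¹) (n := s + 1)]
    simp only [sub_mul, add_mul, smul_mul_assoc, e2, mul_assoc, ← pow_succ, smul_sub, smul_add,
      smul_smul]
    have e3 : q⁻¹ * ((∑ t ∈ range (s + 1), q ^ t) * q ^ 2) = q * ∑ t ∈ range (s + 1), q ^ t := by
      field_simp
    rw [e3, ← pow_succ']
    module

/-- weight of `K` -/
def xw {k : Type} [Field k] (n : ℕ) (q κ : k) (a b : ℕ) : k := κ * (q ^ n) ^ a * ((q ^ n)⁻¹) ^ b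
/-- weight of `K⁻¹K̂` -/
def gw {k : Type} [Field k] (q l : k) (a b : ℕ) : k := l * (q⁻¹) ^ (2 * a) * q ^ (2 * b)
/-- coefficient of the action of `F` -/
def dc {k : Type} [Field k] (q l : k) (a b : ℕ) : k :=
  (∑ t ∈ range (a + 1), q⁻¹ ^ t) * (1 - l * q ^ (2 * b) * q⁻¹ ^ a)

def opK {k : Type} [Field k] (n : ℕ) (q κ : k) : Module.End k (V k (n ^ 2)) :=
  lin k (n ^ 2) (fun a b => xw n q κ a b • ev k (n ^ 2) a b)
def opKh {k : Type} [Field k] (n : ℕ) (q κ l : k) : Module.End k (V k (n ^ 2)) :=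
  lin k (n ^ 2) (fun a b => (xw n q κ a b * gw q l a b) • ev k (n ^ 2) a b)
def opE {k : Type} [Field k] (n : ℕ) : Module.End k (V k (n ^ 2)) :=
  lin k (n ^ 2) (fun a b => ev k (n ^ 2) (a + 1) b)
def opF {k : Type} [Field k] (n : ℕ) (q l : k) : Module.End k (V k (n ^ 2)) :=
  lin k (n ^ 2) (fun a b => match a with
    | 0 => ev k (n ^ 2) 0 (b + 1)
    | a + 1 => q⁻¹ ^ (a + 1) • ev k (n ^ 2) (a + 1) (b + 1) + dc q l a b • ev k (n ^ 2) a b)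

theorem opK_ev {k : Type} [Field k] (n : ℕ) (q κ : k) (a b : ℕ) :
    opK n q κ (ev k (n ^ 2) a b) = xw n q κ a b • ev k (n ^ 2) a b := by
  apply lin_ev
  intro a b h
  rw [ev_zero k _ a b h, smul_zero]

theorem opKh_ev {k : Type} [Field k] (n : ℕ) (q κ l : k) (a b : ℕ) :
    opKh n q κ l (ev k (n ^ 2) a b) = (xw n q κ a b * gw q l a b) • ev k (n ^ 2) a b := by
  apply lin_ev
  intro a b h
  rw [ev_zero k _ a b h, smul_zero]

theorem opE_ev {k : Type} [Field k] (n : ℕ) (a b : ℕ) :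
    opE n (ev k (n ^ 2) a b) = ev k (n ^ 2) (a + 1) b := by
  apply lin_ev
  intro a b h
  rw [ev_zero]
  omega

theorem opE_pow_ev {k : Type} [Field k] (n : ℕ) (t a b : ℕ) :
    (opE n ^ t) (ev k (n ^ 2) a b) = ev k (n ^ 2) (a + t) b := by
  induction t generalizing a with
  | zero => simp
  | succ t ih => rw [pow_succ (opE n), Module.End.mul_apply, opE_ev, ih, add_assoc, add_comm 1 t]

section
variable {k : Type} [Field k] (n : ℕ) (q κ l : k) (hq : IsPrimitiveRoot q (n ^ 2))
  (hN : 1 < n ^ 2)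

theorem opF_aux (hq : IsPrimitiveRoot q (n ^ 2)) (hN : 1 < n ^ 2) (a b : ℕ) :
    opF n q l (ev k (n ^ 2) a b) = (match a with
    | 0 => ev k (n ^ 2) 0 (b + 1)
    | a + 1 => q⁻¹ ^ (a + 1) • ev k (n ^ 2) (a + 1) (b + 1) + dc q l a b • ev k (n ^ 2) a b) := by
  apply lin_ev k (n ^ 2) (fun a b => match a with
    | 0 => ev k (n ^ 2) 0 (b + 1)
    | a + 1 => q⁻¹ ^ (a + 1) • ev k (n ^ 2) (a + 1) (b + 1) + dc q l a b • ev k (n ^ 2) a b)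
  intro a b h
  rcases a with _ | a
  · exact ev_zero _ _ _ _ (by omega)
  · show _ + _ = _
    rw [ev_zero k _ (a + 1) (b + 1) (by omega), smul_zero, zero_add]
    by_cases h2 : a + 1 = n ^ 2
    · rw [dc, h2, gs_zero q⁻¹ (n ^ 2) hq.inv hN, zero_mul, zero_smul]
    · rw [ev_zero k _ a b (by omega), smul_zero]

theorem opF_ev0 (hq : IsPrimitiveRoot q (n ^ 2)) (hN : 1 < n ^ 2) (b : ℕ) :
    opF n q l (ev k (n ^ 2) 0 b) = ev k (n ^ 2) 0 (b + 1) := opF_aux n q l hq hN 0 b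

theorem opF_ev1 (hq : IsPrimitiveRoot q (n ^ 2)) (hN : 1 < n ^ 2) (a b : ℕ) :
    opF n q l (ev k (n ^ 2) (a + 1) b) =
    q⁻¹ ^ (a + 1) • ev k (n ^ 2) (a + 1) (b + 1) + dc q l a b • ev k (n ^ 2) a b :=
  opF_aux n q l hq hN (a + 1) b

theorem opF_pow_ev0 (hq : IsPrimitiveRoot q (n ^ 2)) (hN : 1 < n ^ 2) (t b : ℕ) :
    (opF n q l ^ t) (ev k (n ^ 2) 0 b) = ev k (n ^ 2) 0 (b + t) := by
  induction t generalizing b with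
  | zero => simp
  | succ t ih => rw [pow_succ (opF n q l), Module.End.mul_apply, opF_ev0 n q l hq hN, ih, add_assoc, add_comm 1 t]

theorem xw_a (a b : ℕ) : xw n q κ (a + 1) b = q ^ n * xw n q κ a b := by
  simp only [xw]; ring
theorem xw_b (a b : ℕ) : xw n q κ a (b + 1) = (q ^ n)⁻¹ * xw n q κ a b := by
  simp only [xw]; ring
theorem gw_a (a b : ℕ) : gw q l (a + 1) b = (q ^ 2)⁻¹ * gw q l a b := by
  simp only [gw]; rw [mul_add, pow_add, inv_pow, inv_pow]; ring
theorem gw_b (a b : ℕ) : gw q l a (b + 1) = q ^ 2 * gw q l a b := by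
  simp only [gw]; ring

theorem xw_pow (h : q ^ n ^ 2 = 1) (hκ : κ ^ n = 1) (a b : ℕ) : xw n q κ a b ^ n = 1 := by
  have h' : (q ^ n) ^ n = 1 := by rw [← pow_mul, ← sq, h]
  simp only [xw, mul_pow, hκ, inv_pow, ← pow_mul]
  rw [mul_right_comm n a n, mul_right_comm n b n, ← sq, pow_mul q, pow_mul q, h]
  simp

theorem xg_pow (h0 : q ≠ 0) (hκl : κ ^ 2 * l ^ n = 1) (a b : ℕ) :
    xw n q κ a b ^ 2 * gw q l a b ^ n = 1 := by
  simp only [xw, gw, mul_pow, inv_pow, ← pow_mul]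
  have e1 : q ^ (2 * a * n) = q ^ (n * a * 2) := by congr 1; ring
  have e2 : q ^ (2 * b * n) = q ^ (n * b * 2) := by congr 1; ring
  rw [e1, e2]
  have h1 := pow_ne_zero (n * a * 2) h0
  have h2 := pow_ne_zero (n * b * 2) h0
  field_simp
  exact hκl

theorem dc_rec (hq0 : q ≠ 0) (a b : ℕ) :
    dc q l (a + 1) b - q⁻¹ * dc q l a b = 1 - gw q l (a + 1) b := by
  have h1 := geom_sum_succ (x := q⁻¹) (n := a + 1)
  have h2 := sum_range_succ (fun t => q⁻¹ ^ t) (a + 1)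
  simp only [dc, gw]
  rw [h1] at h2 ⊢
  generalize ∑ t ∈ range (a + 1), q⁻¹ ^ t = S at *
  have h3 : q⁻¹ * S + 1 - S = q⁻¹ ^ (a + 1) := by rw [h2]; ring
  have h4 : q⁻¹ ^ (2 * (a + 1)) = q⁻¹ ^ (a + 1) * q⁻¹ ^ (a + 1) := by ring
  rw [h4]
  nth_rewrite 2 [← h3]
  ring

theorem dc_zero (b : ℕ) : dc q l 0 b = 1 - gw q l 0 b := by
  simp [dc, gw]

theorem rel_EF (hn : 0 < n) (hq0 : q ≠ 0) (hq : IsPrimitiveRoot q (n ^ 2)) (hN : 1 < n ^ 2)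
    (hκ : κ ^ n = 1) :
    opF n q l * opE n - q⁻¹ • (opE n * opF n q l) = 1 - opK n q κ ^ (n - 1) * opKh n q κ l := by
  apply ext_ev
  intro a b
  have hx := xw_pow n q κ hq.pow_eq_one hκ a b
  have hx' : xw n q κ a b * gw q l a b * xw n q κ a b ^ (n - 1) = gw q l a b := by
    calc _ = xw n q κ a b ^ (n - 1 + 1) * gw q l a b := by ring
      _ = _ := by rw [Nat.sub_add_cancel hn, hx, one_mul]
  simp only [LinearMap.sub_apply, LinearMap.smul_apply, Module.End.mul_apply, Module.End.one_apply,
    opE_ev, opKh_ev, map_smul, eig_pow _ _ _ (opK_ev n q κ a b), smul_smul, hx']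
  rcases a with _ | a
  · rw [opF_ev0 n q l hq hN, opF_ev1 n q l hq hN, opE_ev, dc_zero]
    simp only [zero_add, pow_one]
    module
  · rw [opF_ev1 n q l hq hN, opF_ev1 n q l hq hN, map_add, map_smul, map_smul, opE_ev, opE_ev]
    have := dc_rec q l hq0 a b
    have h5 : gw q l (a + 1) b = 1 - dc q l (a + 1) b + q⁻¹ * dc q l a b := by linear_combination this
    rw [h5]
    module

theorem rel_conjE (y : ℕ → ℕ → k) (c : k) (f : Module.End k (V k (n ^ 2))) (m : ℕ) (hm : 0 < m)
    (hf : ∀ a b, f (ev k (n ^ 2) a b) = y a b • ev k (n ^ 2) a b)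
    (hy : ∀ a b, y a b ^ m = 1) (hc : ∀ a b, y (a + 1) b = c * y a b) :
    f * opE n * f ^ (m - 1) = c • opE n := by
  apply ext_ev
  intro a b
  simp only [LinearMap.smul_apply, Module.End.mul_apply, eig_pow _ _ _ (hf a b), map_smul, opE_ev,
    hf, smul_smul, hc]
  congr 1
  calc _ = c * y a b ^ (m - 1 + 1) := by ring
    _ = _ := by rw [Nat.sub_add_cancel hm, hy, mul_one]

theorem rel_conjF (hq : IsPrimitiveRoot q (n ^ 2)) (hN : 1 < n ^ 2)
    (y : ℕ → ℕ → k) (c c' : k) (hcc : c * c' = 1)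
    (f : Module.End k (V k (n ^ 2))) (m : ℕ) (hm : 0 < m)
    (hf : ∀ a b, f (ev k (n ^ 2) a b) = y a b • ev k (n ^ 2) a b)
    (hy : ∀ a b, y a b ^ m = 1) (hc : ∀ a b, y (a + 1) b = c * y a b)
    (hc' : ∀ a b, y a (b + 1) = c' * y a b) :
    f * opF n q l * f ^ (m - 1) = c' • opF n q l := by
  apply ext_ev
  intro a b
  have h1 : ∀ a b, y a b ^ (m - 1) * y a b = 1 := by
    intro a b
    rw [← pow_succ, Nat.sub_add_cancel hm, hy]
  have h2 := h1 a b
  rcases a with _ | a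
  · simp only [LinearMap.smul_apply, Module.End.mul_apply, eig_pow _ _ _ (hf 0 b), map_smul,
      opF_ev0 n q l hq hN, hf, smul_smul, hc']
    congr 1
    linear_combination c' * h2
  · simp only [LinearMap.smul_apply, Module.End.mul_apply, eig_pow _ _ _ (hf (a + 1) b), map_smul,
      opF_ev1 n q l hq hN, hf, map_add, smul_smul, hc', smul_add]
    have h3 : y a b = c' * y (a + 1) b := by
      rw [hc]; linear_combination - y a b * hcc
    rw [h3]
    congr 2
    · linear_combination c' * q⁻¹ ^ (a + 1) * h2
    · linear_combination c' * dc q l a b * h2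

/-- product operator G = K^(n-1) K̂ -/
theorem opG_ev (hn : 0 < n) (hq : IsPrimitiveRoot q (n ^ 2))
    (hκ : κ ^ n = 1) (a b : ℕ) :
    (opK n q κ ^ (n - 1) * opKh n q κ l) (ev k (n ^ 2) a b) = gw q l a b • ev k (n ^ 2) a b := by
  have hx := xw_pow n q κ hq.pow_eq_one hκ a b
  have hx' : xw n q κ a b * gw q l a b * xw n q κ a b ^ (n - 1) = gw q l a b := by
    calc _ = xw n q κ a b ^ (n - 1 + 1) * gw q l a b := by ring
      _ = _ := by rw [Nat.sub_add_cancel hn, hx, one_mul]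
  simp only [Module.End.mul_apply, opKh_ev, map_smul, eig_pow _ _ _ (opK_ev n q κ a b), smul_smul,
    hx']

theorem GF (hn : 0 < n) (hq0 : q ≠ 0) (hq : IsPrimitiveRoot q (n ^ 2)) (hN : 1 < n ^ 2)
    (hκ : κ ^ n = 1) :
    (opK n q κ ^ (n - 1) * opKh n q κ l) * opF n q l =
      q ^ 2 • (opF n q l * (opK n q κ ^ (n - 1) * opKh n q κ l)) := by
  have hG := opG_ev n q κ l hn hq hκ
  generalize opK n q κ ^ (n - 1) * opKh n q κ l = G at *
  apply ext_ev
  intro a b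
  rcases a with _ | a
  · simp only [LinearMap.smul_apply, Module.End.mul_apply, hG, map_smul,
      opF_ev0 n q l hq hN, smul_smul, gw_b]
  · simp only [LinearMap.smul_apply, Module.End.mul_apply, hG, map_smul,
      opF_ev1 n q l hq hN, smul_smul, gw_b, gw_a, map_add, smul_add]
    congr 2
    · ring
    · field_simp

theorem F_comm (hn : 0 < n) (hq0 : q ≠ 0) (hq : IsPrimitiveRoot q (n ^ 2)) (hN : 1 < n ^ 2)
    (hκ : κ ^ n = 1) (s : ℕ) :
    opF n q l ^ (s + 1) * opE n = q⁻¹ ^ (s + 1) • (opE n * opF n q l ^ (s + 1))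
      + (∑ t ∈ range (s + 1), q⁻¹ ^ t) • opF n q l ^ s
      - (∑ t ∈ range (s + 1), q ^ t) • (opF n q l ^ s * (opK n q κ ^ (n - 1) * opKh n q κ l)) := by
  refine FE_comm (A := Module.End k (V k (n ^ 2))) q hq0 _ _ _ ?_ ?_ s
  · have := rel_EF n q κ l hn hq0 hq hN hκ
    refine LinearMap.ext fun v => ?_
    have hv : (opF n q l * opE n : Module.End k (V k (n ^ 2))) v - (q⁻¹ • (opE n * opF n q l) : Module.End k (V k (n ^ 2))) v
        = v - (opK n q κ ^ (n - 1) * opKh n q κ l) v := LinearMap.congr_fun this v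
    show (opF n q l * opE n : Module.End k (V k (n ^ 2))) v = (q⁻¹ • (opE n * opF n q l) : Module.End k (V k (n ^ 2))) v + v
        - (opK n q κ ^ (n - 1) * opKh n q κ l) v
    rw [sub_eq_iff_eq_add] at hv
    rw [hv]; abel
  · exact GF n q κ l hn hq0 hq hN hκ

theorem rel_E : opE (k := k) n ^ n ^ 2 = 0 := by
  apply ext_ev
  intro a b
  rw [opE_pow_ev, ev_zero]
  · rfl
  · omega

theorem rel_F (hn : 0 < n) (hq0 : q ≠ 0) (hq : IsPrimitiveRoot q (n ^ 2)) (hN : 1 < n ^ 2)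
    (hκ : κ ^ n = 1) : opF n q l ^ n ^ 2 = 0 := by
  have h := F_comm n q κ l hn hq0 hq hN hκ (n ^ 2 - 1)
  rw [Nat.sub_add_cancel hN.le, gs_zero q _ hq hN, gs_zero q⁻¹ _ hq.inv hN, hq.inv.pow_eq_one] at h
  simp only [zero_smul, one_smul, add_zero] at h
  replace h : opF n q l ^ n ^ 2 * opE n = opE n * opF n q l ^ n ^ 2 := by
    rw [h]; exact sub_zero (G := Module.End k (V k (n ^ 2))) _
  apply ext_ev
  intro a b
  induction a with
  | zero =>
    rw [opF_pow_ev0 n q l hq hN, ev_zero]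
    · rfl
    · omega
  | succ a ih =>
    rw [← opE_ev, ← Module.End.mul_apply, h, Module.End.mul_apply, ih]
    simp

/-- key computation -/
theorem key (hn : 0 < n) (hq0 : q ≠ 0) (hq : IsPrimitiveRoot q (n ^ 2)) (hN : 1 < n ^ 2)
    (hκ : κ ^ n = 1) (i : ℕ) (hi : 1 ≤ i) (hl : l = q⁻¹ ^ (2 * i)) (m : ℕ)
    (hm : m + 2 * i ≤ n ^ 2) :
    (opE n ^ (n ^ 2 - 1)) ((opF n q l ^ (2 * i - 1 + m)) (ev k (n ^ 2) m 0)) ≠ 0 := by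
  induction m with
  | zero =>
    rw [opF_pow_ev0 n q l hq hN, opE_pow_ev]
    apply ev_ne
    omega
  | succ m ih =>
    rw [← opE_ev, ← add_assoc, ← Module.End.mul_apply (opF n q l ^ _),
      F_comm n q κ l hn hq0 hq hN hκ]
    have hE : ∀ v : V k (n ^ 2), (opE n ^ (n ^ 2 - 1)) (opE n v) = 0 := by
      intro v
      rw [← Module.End.mul_apply, ← pow_succ, Nat.sub_add_cancel hN.le, rel_E]; rfl
    have e1 : gw q l m 0 = q⁻¹ ^ (2 * i + 2 * m) := by
      rw [gw, hl]; ring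
    rw [LinearMap.sub_apply, LinearMap.add_apply, LinearMap.smul_apply, LinearMap.smul_apply,
      LinearMap.smul_apply, Module.End.mul_apply, Module.End.mul_apply,
      opG_ev n q κ l hn hq hκ, map_sub, map_add, map_smul, map_smul, map_smul, map_smul, map_smul,
      hE, smul_zero, zero_add, smul_smul, ← sub_smul]
    refine smul_ne_zero ?_ (ih (by omega))
    rw [gs_rel q hq0, e1]
    have e2 : q⁻¹ ^ (2 * i + 2 * m) = q⁻¹ ^ (2 * i - 1 + m) * q⁻¹ ^ (m + 1) := by
      rw [← pow_add]; congr 1; omega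
    have e3 : q ^ (2 * i - 1 + m) * q⁻¹ ^ (2 * i - 1 + m) = 1 := by
      rw [← mul_pow, mul_inv_cancel₀ hq0, one_pow]
    have e4 : (∑ t ∈ range (2 * i - 1 + m + 1), q⁻¹ ^ t) -
        q ^ (2 * i - 1 + m) * (∑ t ∈ range (2 * i - 1 + m + 1), q⁻¹ ^ t) * q⁻¹ ^ (2 * i + 2 * m)
        = (∑ t ∈ range (2 * i - 1 + m + 1), q⁻¹ ^ t) * (1 - q⁻¹ ^ (m + 1)) := by
      rw [e2]
      linear_combination (-(∑ t ∈ range (2 * i - 1 + m + 1), q⁻¹ ^ t)) * q⁻¹ ^ (m + 1) * e3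
    rw [e4]
    refine mul_ne_zero (gs_ne _ _ hq.inv _ (by omega) (by omega)) ?_
    rw [sub_ne_zero]
    exact (hq.inv.pow_ne_one_of_pos_of_lt (by omega) (by omega)).symm

def gens : Fin 4 → Module.End k (V k (n ^ 2)) :=
  ![opK n q κ, opKh n q κ l, opE n, opF n q l]

theorem rels (hn : 0 < n) (hq0 : q ≠ 0) (hq : IsPrimitiveRoot q (n ^ 2)) (hN : 1 < n ^ 2)
    (hκ : κ ^ n = 1) (hκl : κ ^ 2 * l ^ n = 1) {x y : FreeAlgebra k (Fin 4)}
    (h : QFL.Rel k n q x y) :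
    FreeAlgebra.lift k (gens n q κ l) x = FreeAlgebra.lift k (gens n q κ l) y := by
  have g0 : gens n q κ l 0 = opK n q κ := rfl
  have g1 : gens n q κ l 1 = opKh n q κ l := rfl
  have g2 : gens n q κ l 2 = opE n := rfl
  have g3 : gens n q κ l 3 = opF n q l := rfl
  have hx := xw_pow n q κ hq.pow_eq_one hκ
  have hxg := xg_pow n q κ l hq0 hκl
  have hy : ∀ a b, (xw n q κ a b * gw q l a b) ^ n = (xw n q κ a b ^ (n - 1)) ^ 2 := by
    intro a b
    have h1 : xw n q κ a b ^ (n - 1) * xw n q κ a b = 1 := by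
      rw [← pow_succ, Nat.sub_add_cancel hn, hx]
    have h2 := hxg a b
    rw [mul_pow, hx, one_mul]
    calc gw q l a b ^ n = (xw n q κ a b ^ (n - 1) * xw n q κ a b) ^ 2 * gw q l a b ^ n := by
          rw [h1]; ring
      _ = (xw n q κ a b ^ (n - 1)) ^ 2 * (xw n q κ a b ^ 2 * gw q l a b ^ n) := by ring
      _ = _ := by rw [h2, mul_one]
  have hy2 : ∀ a b, (xw n q κ a b * gw q l a b) ^ n ^ 2 = 1 := by
    intro a b
    rw [sq, pow_mul, hy, ← pow_mul, ← pow_mul, show (n - 1) * (2 * n) = n * ((n - 1) * 2) by ring,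
      pow_mul, hx, one_pow]
  have hqn : q ^ n ≠ 0 := pow_ne_zero _ hq0
  cases h <;> simp only [map_pow, map_mul, map_sub, map_smul, map_one, map_zero,
    FreeAlgebra.lift_ι_apply, g0, g1, g2, g3]
  · apply ext_ev
    intro a b
    rw [eig_pow _ _ _ (opK_ev n q κ a b), hx, one_smul]; rfl
  · apply ext_ev
    intro a b
    rw [eig_pow _ _ _ (opKh_ev n q κ l a b), ← pow_mul, eig_pow _ _ _ (opK_ev n q κ a b), pow_mul,
      hy]
  · apply ext_ev
    intro a b
    rw [Module.End.mul_apply, Module.End.mul_apply, opK_ev, opKh_ev, map_smul, map_smul, opK_ev,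
      opKh_ev, smul_comm]
  · exact rel_conjE n _ _ _ n hn (opK_ev n q κ) hx (xw_a n q κ)
  · exact rel_conjF n q l hq hN _ _ _ (mul_inv_cancel₀ hqn) _ n hn (opK_ev n q κ) hx (xw_a n q κ)
      (xw_b n q κ)
  · exact rel_conjE n _ _ _ (n ^ 2) (by omega) (opKh_ev n q κ l) hy2
      (fun a b => by rw [xw_a, gw_a]; ring)
  · refine rel_conjF n q l hq hN _ (q ^ n * (q ^ 2)⁻¹) _ ?_ _ (n ^ 2) (by omega)
      (opKh_ev n q κ l) hy2
      (fun a b => by rw [xw_a, gw_a]; ring) (fun a b => by rw [xw_b, gw_b]; ring)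
    field_simp
  · exact rel_E n
  · exact rel_F n q κ l hn hq0 hq hN hκ
  · exact rel_EF n q κ l hn hq0 hq hN hκ

end

theorem main (k : Type) [Field k] [CharZero k]
    (n : ℕ) (hn : 0 < n) (h4 : 4 ∣ n) (q : k) (hq : IsPrimitiveRoot q (n ^ 2))
    (i j : ℕ) (hi : 1 ≤ i) (hi2 : i ≤ n ^ 2 / 2) (hj : j ≤ 1) :
    QFL.E k n q ^ (n ^ 2 - 1) * QFL.alpha k n q i j * QFL.E k n q ^ (n ^ 2 - 2 * i) ≠ 0 := by
  have hN : 1 < n ^ 2 := by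
    have : 4 ≤ n := Nat.le_of_dvd hn h4
    nlinarith
  have hq0 : q ≠ 0 := hq.ne_zero (by omega)
  obtain ⟨p, hp⟩ := h4
  have hp1 : n / 2 = 2 * p := by omega
  have hN2 : n ^ 2 = 2 * (n ^ 2 / 2) := by
    have : n ^ 2 = 2 * (8 * p ^ 2) := by rw [hp]; ring
    omega
  have hhalf : q ^ (n * (2 * p)) = -1 := by
    have e : n ^ 2 = n * (2 * p) * 2 := by rw [hp]; ring
    have hpos : 0 < n * (2 * p) := Nat.mul_pos hn (by omega)
    have h1 : (q ^ (n * (2 * p))) ^ 2 = 1 := by rw [← pow_mul, ← e, hq.pow_eq_one]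
    rcases eq_or_eq_neg_of_sq_eq_sq (q ^ (n * (2 * p))) 1 (by rw [h1, one_pow]) with h | h
    · exact absurd h (hq.pow_ne_one_of_pos_of_lt hpos.ne' (by rw [e]; omega))
    · exact h
  set ε : k := (-1) ^ (i + j) with hε
  have hε2 : ε ^ 2 = 1 := by rw [hε, ← pow_mul, mul_comm, pow_mul]; simp
  have hεe : ∀ t, ε ^ (2 * t) = 1 := fun t => by rw [pow_mul, hε2, one_pow]
  set κ : k := ε * q ^ (i * n) with hκd
  set l : k := q⁻¹ ^ (2 * i) with hld
  have hκ : κ ^ n = 1 := by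
    have e1 : q ^ (i * n * n) = 1 := by
      rw [mul_assoc, ← sq, mul_comm, pow_mul, hq.pow_eq_one, one_pow]
    have e2 : ε ^ n = 1 := by
      have := hεe (2 * p)
      rwa [show 2 * (2 * p) = n by omega] at this
    rw [hκd, mul_pow, e2, ← pow_mul, e1, one_mul]
  have hκl : κ ^ 2 * l ^ n = 1 := by
    rw [hκd, hld, mul_pow, hε2, one_mul, ← pow_mul, ← pow_mul,
      show 2 * i * n = i * n * 2 by ring, ← mul_pow, mul_inv_cancel₀ hq0, one_pow]
  let ρ : QFL.U k n q →ₐ[k] Module.End k (V k (n ^ 2)) :=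
    RingQuot.liftAlgHom k ⟨FreeAlgebra.lift k (gens n q κ l),
      fun _ _ h => rels n q κ l hn hq0 hq hN hκ hκl h⟩
  have rK : ρ (QFL.K k n q) = opK n q κ := by
    simp only [ρ, QFL.K, RingQuot.liftAlgHom_mkAlgHom_apply, FreeAlgebra.lift_ι_apply]; rfl
  have rKh : ρ (QFL.Kh k n q) = opKh n q κ l := by
    simp only [ρ, QFL.Kh, RingQuot.liftAlgHom_mkAlgHom_apply, FreeAlgebra.lift_ι_apply]; rfl
  have rE : ρ (QFL.E k n q) = opE n := by
    simp only [ρ, QFL.E, RingQuot.liftAlgHom_mkAlgHom_apply, FreeAlgebra.lift_ι_apply]; rfl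
  have rF : ρ (QFL.F k n q) = opF n q l := by
    simp only [ρ, QFL.F, RingQuot.liftAlgHom_mkAlgHom_apply, FreeAlgebra.lift_ι_apply]; rfl
  clear_value ρ
  obtain ⟨m, hm⟩ : ∃ m, m + 2 * i = n ^ 2 := ⟨n ^ 2 - 2 * i, by omega⟩
  have hm' : n ^ 2 - 2 * i = m := by omega
  have hg : gw q l m 0 = q ^ (2 * i) := by
    have e1 : q⁻¹ ^ (2 * i + 2 * m) * q⁻¹ ^ (2 * i) = 1 := by
      rw [← pow_add, show 2 * i + 2 * m + 2 * i = n ^ 2 * 2 by omega, pow_mul,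
        hq.inv.pow_eq_one, one_pow]
    have e2 : q⁻¹ ^ (2 * i) * q ^ (2 * i) = 1 := by
      rw [← mul_pow, inv_mul_cancel₀ hq0, one_pow]
    calc gw q l m 0 = q⁻¹ ^ (2 * i + 2 * m) * (q⁻¹ ^ (2 * i) * q ^ (2 * i)) := by
          rw [e2, gw, hld]; ring
      _ = (q⁻¹ ^ (2 * i + 2 * m) * q⁻¹ ^ (2 * i)) * q ^ (2 * i) := by ring
      _ = _ := by rw [e1, one_mul]
  have hX : xw n q κ m 0 = ε * q⁻¹ ^ (i * n) := by
    have e1 : (q ^ n) ^ m * q ^ (2 * i * n) = 1 := by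
      rw [← pow_mul, ← pow_add, show n * m + 2 * i * n = (m + 2 * i) * n by ring, hm, pow_mul,
        hq.pow_eq_one, one_pow]
    have e2 : q ^ (i * n) * q⁻¹ ^ (i * n) = 1 := by
      rw [← mul_pow, mul_inv_cancel₀ hq0, one_pow]
    calc xw n q κ m 0 = ε * q ^ (i * n) * (q ^ n) ^ m * (q ^ (i * n) * q⁻¹ ^ (i * n)) := by
          rw [e2, xw, hκd]; ring
      _ = ε * ((q ^ n) ^ m * q ^ (2 * i * n)) * q⁻¹ ^ (i * n) := by ring
      _ = _ := by rw [e1, mul_one]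
  have hXY : (xw n q κ m 0 * gw q l m 0) ^ (2 * p) * xw n q κ m 0 = (-1) ^ j := by
    have e2 : q⁻¹ ^ (i * n) * q ^ (i * n) = 1 := by
      rw [← mul_pow, inv_mul_cancel₀ hq0, one_pow]
    have e3 : (q ^ (2 * i)) ^ (2 * p) = q ^ (i * n) := by
      rw [← pow_mul]; congr 1; rw [hp]; ring
    have e4 : (q⁻¹ ^ (i * n)) ^ (2 * p) = (-1) ^ i := by
      rw [← pow_mul, show i * n * (2 * p) = n * (2 * p) * i by ring, pow_mul, inv_pow, hhalf]
      norm_num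
    have e5 : ((-1 : k) ^ i) * ε = (-1) ^ j := by
      rw [hε, pow_add, ← mul_assoc, ← mul_pow]; simp
    rw [hX, hg, mul_pow, mul_pow, hεe, e3, e4, ← e5]
    linear_combination (-1) ^ i * ε * e2
  have hphi : ρ (QFL.phi k n q i) (ev k (n ^ 2) m 0) = ev k (n ^ 2) m 0 := by
    have hG := opG_ev n q κ l hn hq hκ m 0
    simp only [QFL.phi, QFL.Kinv, map_smul, map_sum, map_pow, map_mul, rK, rKh,
      LinearMap.smul_apply, LinearMap.sum_apply]
    have e1 : ∀ t, q⁻¹ ^ (2 * i * t) •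
        ((opK n q κ ^ (n - 1) * opKh n q κ l) ^ t) (ev k (n ^ 2) m 0) = ev k (n ^ 2) m 0 := by
      intro t
      rw [eig_pow _ _ _ hG, hg, smul_smul, ← pow_mul, ← mul_pow, inv_mul_cancel₀ hq0, one_pow,
        one_smul]
    simp only [e1, sum_const, card_range]
    rw [← Nat.cast_smul_eq_nsmul k, smul_smul]
    have e2 : ((n : k) ^ 2) = 2 * ((n ^ 2 / 2 : ℕ) : k) := by exact_mod_cast hN2
    have e3 : ((n : k) ^ 2) ≠ 0 := by
      have : (n : k) ≠ 0 := by exact_mod_cast hn.ne'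
      exact pow_ne_zero _ this
    rw [mul_assoc, ← e2, inv_mul_cancel₀ e3, one_smul]
  have hone : ρ (QFL.oneJ k n q j) (ev k (n ^ 2) m 0) = ev k (n ^ 2) m 0 := by
    have hKK : (opK n q κ * opKh n q κ l ^ (2 * p)) (ev k (n ^ 2) m 0)
        = (-1 : k) ^ j • ev k (n ^ 2) m 0 := by
      rw [Module.End.mul_apply, eig_pow _ _ _ (opKh_ev n q κ l m 0), map_smul, opK_ev, smul_smul,
        hXY]
    have h2 : (2 : k) ≠ 0 := two_ne_zero
    rcases (by omega : j = 0 ∨ j = 1) with rfl | rfl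
    · simp only [QFL.oneJ, if_true, map_smul, map_add, map_mul, map_pow, map_one, rK, rKh, hp1,
        LinearMap.smul_apply, LinearMap.add_apply, hKK, Module.End.one_apply]
      rw [pow_zero, one_smul, ← two_smul k, smul_smul, inv_mul_cancel₀ h2, one_smul]
    · simp only [QFL.oneJ, one_ne_zero, if_false, map_smul, map_sub, map_mul, map_pow, map_one,
        rK, rKh, hp1, LinearMap.smul_apply, LinearMap.sub_apply, hKK, Module.End.one_apply]
      rw [pow_one, neg_one_smul, sub_neg_eq_add, ← two_smul k, smul_smul, inv_mul_cancel₀ h2,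
        one_smul]
  intro h
  have h' := congrArg (fun f => f (ev k (n ^ 2) 0 0)) (congrArg ρ h)
  simp only [QFL.alpha, QFL.eIdem, map_mul, map_pow, rE, rF, map_zero, LinearMap.zero_apply,
    Module.End.mul_apply, hm'] at h'
  rw [opE_pow_ev, zero_add, hone, hphi] at h'
  refine key n q κ l hn hq0 hq hN hκ i hi hld m hm.le ?_
  rw [show 2 * i - 1 + m = n ^ 2 - 1 by omega]
  exact h'

end QFLaux

open QFL in
/-- Lemma 2.10: `E^(n²-1) α_{2i,j} E^(n²-2i) ≠ 0` in `ũ_q(sl₂)`. -/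
theorem statement6 (k : Type) [Field k] [IsAlgClosed k] [CharZero k]
    (n : ℕ) (hn : 0 < n) (h4 : 4 ∣ n) (q : k) (hq : IsPrimitiveRoot q (n ^ 2)) :
    ∀ i j : ℕ, 1 ≤ i → i ≤ n ^ 2 / 2 → j ≤ 1 →
      E k n q ^ (n ^ 2 - 1) * alpha k n q i j * E k n q ^ (n ^ 2 - 2 * i) ≠ 0 := by
  intro i j hi hi2 hj
  exact QFLaux.main k n hn h4 q hq i j hi hi2 hj
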